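/- Let G and H be weighted graphs on the same finite nonempty vertex set V, with vol_G(V) > 0, and let D_G be the demand graph of G. Suppose α, β ≥ 0 are such that cap_G(S) ≥ α·cap_{D_G}(S) and cap_G(S) ≥ β·cap_H(S) for every subset S ⊆ V. Then for every vector x : V → ℝ satisfying ∑_{v ∈ V} d_G(v)·x(v) = 0, one has 4·Q_G(x) ≥ α·β·Q_H(x). (Equivalently, x^T L_G x / x^T L_H x ≥ φ(G,D_G)·φ(G,H)/4 for all x with x^T d = 0.) -/

import Mathlib

open Finset

/-- Cut capacity of `S` in the weighted graph `w`: total weight crossing from `S` to its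
complement. -/
def cap {V : Type*} [Fintype V] [DecidableEq V] (w : V → V → ℝ) (S : Finset V) : ℝ :=
  ∑ u ∈ S, ∑ v ∈ Sᶜ, w u v

/-- Degree of a vertex in the weighted graph `w`. -/
def deg {V : Type*} [Fintype V] (w : V → V → ℝ) (v : V) : ℝ :=
  ∑ u, w v u

/-- Volume of a vertex subset. -/
def vol {V : Type*} [Fintype V] (w : V → V → ℝ) (S : Finset V) : ℝ :=
  ∑ v ∈ S, deg w v

/-- Laplacian quadratic form `xᵀ L_w x` of the weighted graph `w`. -/
noncomputable def quadForm {V : Type*} [Fintype V] (w : V → V → ℝ) (x : V → ℝ) : ℝ :=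
  (1 / 2) * ∑ u, ∑ v, w u v * (x u - x v) ^ 2

/-- The demand graph of `G`. -/
noncomputable def demand {V : Type*} [Fintype V] [DecidableEq V] (G : V → V → ℝ) :
    V → V → ℝ :=
  fun u v => if u = v then 0 else deg G u * deg G v / vol G Finset.univ

set_option linter.unusedSectionVars false

namespace GC

noncomputable def f (t : ℝ) : ℝ := t * |t|

lemma f_mono {a b : ℝ} (h : a ≤ b) : f a ≤ f b := by
  unfold f
  rcases abs_cases a with ⟨h1, h2⟩ | ⟨h1, h2⟩ <;> rcases abs_cases b with ⟨h3, h4⟩ | ⟨h3, h4⟩ <;>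
    rw [h1, h3] <;> nlinarith

lemma tri_sorted (a b c : ℝ) (h1 : c ≤ b) (h2 : b ≤ a) :
    |f (a - c) - f (b - c)| + |f (a - b) - f (c - b)| + |f (b - a) - f (c - a)|
    = |a - b| * |a - c| + |b - a| * |b - c| + |c - a| * |c - b|
      + ((a - b)^2 + (b - c)^2 + (c - a)^2) / 2 := by
  rw [abs_of_nonneg (sub_nonneg.2 (f_mono (by linarith : b - c ≤ a - c))),
    abs_of_nonneg (sub_nonneg.2 (f_mono (by linarith : c - b ≤ a - b))),
    abs_of_nonneg (sub_nonneg.2 (f_mono (by linarith : c - a ≤ b - a)))]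
  unfold f
  rw [abs_of_nonneg (by linarith : 0 ≤ a - c), abs_of_nonneg (by linarith : 0 ≤ b - c),
    abs_of_nonneg (by linarith : 0 ≤ a - b), abs_of_nonpos (by linarith : c - b ≤ 0),
    abs_of_nonpos (by linarith : b - a ≤ 0), abs_of_nonpos (by linarith : c - a ≤ 0)]
  ring

lemma tri (a b c : ℝ) :
    |f (a - c) - f (b - c)| + |f (a - b) - f (c - b)| + |f (b - a) - f (c - a)|
    = |a - b| * |a - c| + |b - a| * |b - c| + |c - a| * |c - b|
      + ((a - b)^2 + (b - c)^2 + (c - a)^2) / 2 := by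
  have e1 := abs_sub_comm a b
  have e2 := abs_sub_comm a c
  have e3 := abs_sub_comm b c
  have e4 := abs_sub_comm (f (a - c)) (f (b - c))
  have e5 := abs_sub_comm (f (a - b)) (f (c - b))
  have e6 := abs_sub_comm (f (b - a)) (f (c - a))
  rcases le_total a b with h1 | h1 <;> rcases le_total b c with h2 | h2 <;>
    rcases le_total a c with h3 | h3
  · have := tri_sorted c b a h1 h2
    rw [e1, e2, e3] at *; linarith
  · have := tri_sorted c b a h1 h2
    rw [e1, e2, e3] at *; linarith
  · have := tri_sorted b c a h3 h2
    rw [e1, e2, e3] at *; linarith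
  · have := tri_sorted b a c h3 h1
    rw [e1, e2, e3] at *; linarith
  · have := tri_sorted c a b h1 h3
    rw [e1, e2, e3] at *; linarith
  · have := tri_sorted a c b h2 h3
    rw [e1, e2, e3] at *; linarith
  · have := tri_sorted a b c h2 h1
    rw [e1, e2, e3] at *; linarith
  · have := tri_sorted a b c h2 h1
    rw [e1, e2, e3] at *; linarith

lemma f_diff_le (p q : ℝ) : |f p - f q| ≤ |p - q| * (|p| + |q|) := by
  unfold f
  rcases abs_cases p with ⟨h1, h2⟩ | ⟨h1, h2⟩ <;> rcases abs_cases q with ⟨h3, h4⟩ | ⟨h3, h4⟩ <;>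
    rw [h1, h3] <;> rcases abs_cases (p - q) with ⟨h5, h6⟩ | ⟨h5, h6⟩ <;> rw [h5, abs_le] <;>
    constructor <;> nlinarith

lemma f_diff_le' (p q : ℝ) : |f p - f q| ≤ p ^ 2 + q ^ 2 := by
  unfold f
  rcases abs_cases p with ⟨h1, h2⟩ | ⟨h1, h2⟩ <;> rcases abs_cases q with ⟨h3, h4⟩ | ⟨h3, h4⟩ <;>
    rw [h1, h3, abs_le] <;> constructor <;> nlinarith [sq_nonneg p, sq_nonneg q]

lemma f_diff_ge (p q : ℝ) : (p - q) ^ 2 / 2 ≤ |f p - f q| := by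
  unfold f
  rcases abs_cases p with ⟨h1, h2⟩ | ⟨h1, h2⟩ <;> rcases abs_cases q with ⟨h3, h4⟩ | ⟨h3, h4⟩ <;>
    rw [h1, h3, le_abs] <;> rcases le_total p q with h | h <;>
    first
    | (left; nlinarith [sq_nonneg (p + q)])
    | (right; nlinarith [sq_nonneg (p + q)])

lemma jensen_pt (a b t : ℝ) (h : b ≤ a) :
    f a - f b + 2 * t * (|b| - |a|) ≤ f (a - t) - f (b - t) := by
  unfold f
  rcases abs_cases a with ⟨h1, h2⟩ | ⟨h1, h2⟩ <;> rcases abs_cases b with ⟨h3, h4⟩ | ⟨h3, h4⟩ <;>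
    rw [h1, h3] <;> rcases abs_cases (a - t) with ⟨h5, h6⟩ | ⟨h5, h6⟩ <;> rw [h5] <;>
    rcases abs_cases (b - t) with ⟨h7, h8⟩ | ⟨h7, h8⟩ <;> rw [h7] <;>
    nlinarith [sq_nonneg (a - t), sq_nonneg (b - t), sq_nonneg t]

variable {V : Type*} [Fintype V] [DecidableEq V]

lemma ind_sum (W : V → V → ℝ) (S : Finset V) :
    ∑ u, ∑ v, W u v * (if (u ∈ S ↔ v ∈ S) then 0 else 1) = cap W S + cap W Sᶜ := by
  unfold cap
  rw [← Finset.sum_add_sum_compl S, compl_compl]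
  congr 1
  · refine Finset.sum_congr rfl fun u hu => ?_
    rw [← Finset.sum_add_sum_compl S, Finset.sum_eq_zero, zero_add]
    · refine Finset.sum_congr rfl fun v hv => ?_
      simp [hu, Finset.mem_compl.1 hv]
    · intro v hv; simp [hu, hv]
  · refine Finset.sum_congr rfl fun u hu => ?_
    rw [← Finset.sum_add_sum_compl S, add_comm, Finset.sum_eq_zero, zero_add]
    · refine Finset.sum_congr rfl fun v hv => ?_
      simp [hv, Finset.mem_compl.1 hu]
    · intro v hv; simp [Finset.mem_compl.1 hu, Finset.mem_compl.1 hv]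

lemma coarea (W : V → V → ℝ) (hW : ∀ S, 0 ≤ cap W S) (n : ℕ) :
    ∀ h : V → ℝ, (univ.image h).card ≤ n → 0 ≤ ∑ u, ∑ v, W u v * |h u - h v| := by
  induction n with
  | zero =>
    intro h hh
    have : IsEmpty V := by
      by_contra hne
      rw [not_isEmpty_iff] at hne
      have : 0 < (univ.image h).card := Finset.card_pos.2 (univ_nonempty.image h)
      omega
    simp
  | succ n ih =>
    intro h hh
    by_cases hn : (univ.image h).Nonempty
    swap
    · rw [Finset.not_nonempty_iff_eq_empty] at hn
      exact ih h (by simp [hn])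
    obtain ⟨M, hM⟩ : ∃ M, M = (univ.image h).max' hn := ⟨_, rfl⟩
    have hle : ∀ v, h v ≤ M := fun v => hM ▸ Finset.le_max' _ _ (by simp)
    have hMmem : M ∈ univ.image h := hM ▸ Finset.max'_mem _ _
    by_cases hn2 : ((univ.image h).erase M).Nonempty
    swap
    · rw [Finset.not_nonempty_iff_eq_empty] at hn2
      have : ∀ v, h v = M := by
        intro v
        by_contra hne
        have : h v ∈ (univ.image h).erase M := by simp [hne]
        rw [hn2] at this; simp at this
      simp [this]
    obtain ⟨m, hm⟩ : ∃ m, m = ((univ.image h).erase M).max' hn2 := ⟨_, rfl⟩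
    have hmmem : m ∈ (univ.image h).erase M := hm ▸ Finset.max'_mem _ _
    have hle2 : ∀ v, h v ≠ M → h v ≤ m := fun v hv =>
      hm ▸ Finset.le_max' _ _ (by simp [hv])
    have hmM : m ≤ M := by
      rw [Finset.mem_erase] at hmmem
      rw [hM]; exact Finset.le_max' _ _ hmmem.2
    have key : ∀ u v, |h u - h v| = |min (h u) m - min (h v) m| +
        (M - m) * (if (u ∈ univ.filter (fun v => h v = M) ↔ v ∈ univ.filter (fun v => h v = M))
          then 0 else 1) := by
      intro u v
      simp only [Finset.mem_filter, Finset.mem_univ, true_and]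
      by_cases hu : h u = M <;> by_cases hv : h v = M
      · simp [hu, hv]
      · have := hle2 v hv
        simp only [hu, hv, iff_false, not_true_eq_false, if_false, min_eq_right hmM,
          min_eq_left this]
        rw [abs_of_nonneg (by linarith), abs_of_nonneg (by linarith)]; ring
      · have := hle2 u hu
        simp only [hu, hv, iff_true, if_false, min_eq_right hmM,
          min_eq_left this]
        rw [abs_of_nonpos (by linarith), abs_of_nonpos (by linarith)]; ring
      · simp [hu, hv, min_eq_left (hle2 u hu), min_eq_left (hle2 v hv)]
    have hcard : (univ.image (fun v => min (h v) m)).card ≤ n := by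
      have hsub : univ.image (fun v => min (h v) m) ⊆ (univ.image h).erase M := by
        intro t ht
        obtain ⟨v, -, rfl⟩ := Finset.mem_image.1 ht
        by_cases hv : h v = M
        · simp only [hv, min_eq_right hmM]; exact hmmem
        · simp only [min_eq_left (hle2 v hv)]; simp [hv]
      have := Finset.card_le_card hsub
      rw [Finset.card_erase_of_mem hMmem] at this
      omega
    have h1 := ih _ hcard
    have h2 := ind_sum W (univ.filter (fun v => h v = M))
    have h3 : ∑ u, ∑ v, W u v * |h u - h v| =
        ∑ u, ∑ v, W u v * |min (h u) m - min (h v) m| + (M - m) *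
        ∑ u, ∑ v, W u v * (if (u ∈ univ.filter (fun v => h v = M) ↔
          v ∈ univ.filter (fun v => h v = M)) then 0 else 1) := by
      rw [Finset.mul_sum, ← Finset.sum_add_distrib]
      refine Finset.sum_congr rfl fun u _ => ?_
      rw [Finset.mul_sum, ← Finset.sum_add_distrib]
      refine Finset.sum_congr rfl fun v _ => ?_
      rw [key]; ring
    rw [h3, h2]
    have := mul_nonneg (sub_nonneg.2 hmM)
      (add_nonneg (hW (univ.filter (fun v => h v = M))) (hW (univ.filter (fun v => h v = M))ᶜ))
    linarith

lemma coarea2 (G H : V → V → ℝ) (b : ℝ) (hc : ∀ S, b * cap H S ≤ cap G S) (h : V → ℝ) :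
    b * ∑ u, ∑ v, H u v * |h u - h v| ≤ ∑ u, ∑ v, G u v * |h u - h v| := by
  have := coarea (fun u v => G u v - b * H u v) (fun S => by
    have := hc S
    unfold cap at *
    simp only [Finset.sum_sub_distrib, ← Finset.mul_sum]
    linarith) _ h le_rfl
  simp only [sub_mul, Finset.sum_sub_distrib, mul_assoc, ← Finset.mul_sum] at this
  linarith

noncomputable def L (μ x : V → ℝ) (u : V) : ℝ := ∑ w, μ w * (f (x u - x w) / 2)
noncomputable def Y (μ x : V → ℝ) (u : V) : ℝ := ∑ w, μ w * |x u - x w|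

lemma absL (μ x : V → ℝ) (hμ : ∀ v, 0 ≤ μ v) (u v : V) :
    |L μ x u - L μ x v| = ∑ w, μ w * (|f (x u - x w) - f (x v - x w)| / 2) := by
  unfold L
  rw [← Finset.sum_sub_distrib]
  rcases le_total (x u) (x v) with h | h
  · have k : ∀ w, f (x u - x w) ≤ f (x v - x w) := fun w => f_mono (by linarith)
    rw [abs_of_nonpos, ← Finset.sum_neg_distrib]
    · refine Finset.sum_congr rfl fun w _ => ?_
      rw [abs_of_nonpos (by linarith [k w])]; ring
    · refine Finset.sum_nonpos fun w _ => ?_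
      nlinarith [k w, hμ w]
  · have k : ∀ w, f (x v - x w) ≤ f (x u - x w) := fun w => f_mono (by linarith)
    rw [abs_of_nonneg]
    · refine Finset.sum_congr rfl fun w _ => ?_
      rw [abs_of_nonneg (by linarith [k w])]; ring
    · refine Finset.sum_nonneg fun w _ => ?_
      nlinarith [k w, hμ w]

lemma absL_le (μ x : V → ℝ) (hμ : ∀ v, 0 ≤ μ v) (u v : V) :
    |L μ x u - L μ x v| ≤ |x u - x v| * ((Y μ x u + Y μ x v) / 2) := by
  rw [absL μ x hμ]
  unfold Y
  rw [← Finset.sum_add_distrib, Finset.sum_div, Finset.mul_sum]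
  refine Finset.sum_le_sum fun w _ => ?_
  have := f_diff_le (x u - x w) (x v - x w)
  rw [show x u - x w - (x v - x w) = x u - x v by ring] at this
  nlinarith [mul_le_mul_of_nonneg_left this (hμ w)]

lemma L_ge (μ x : V → ℝ) (hμ : ∀ v, 0 ≤ μ v) (h1 : ∑ v, μ v = 1) (hx : ∑ v, μ v * x v = 0)
    (u v : V) (h : x v ≤ x u) :
    (f (x u) - f (x v)) / 2 ≤ L μ x u - L μ x v := by
  unfold L
  rw [← Finset.sum_sub_distrib]
  have : ∑ w, μ w * ((f (x u) - f (x v) + 2 * x w * (|x v| - |x u|)) / 2) ≤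
      ∑ w, (μ w * (f (x u - x w) / 2) - μ w * (f (x v - x w) / 2)) := by
    refine Finset.sum_le_sum fun w _ => ?_
    nlinarith [mul_le_mul_of_nonneg_left (jensen_pt (x u) (x v) (x w) h) (hμ w)]
  refine le_trans (le_of_eq ?_) this
  have e : ∀ w, μ w * ((f (x u) - f (x v) + 2 * x w * (|x v| - |x u|)) / 2) =
      μ w * ((f (x u) - f (x v)) / 2) + μ w * x w * (|x v| - |x u|) := fun w => by ring
  simp only [e, Finset.sum_add_distrib, ← Finset.sum_mul, h1, hx]
  ring

/-- absolute differences of `M = 2L - F/2`. -/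
lemma absM (μ x : V → ℝ) (hμ : ∀ v, 0 ≤ μ v) (h1 : ∑ v, μ v = 1) (hx : ∑ v, μ v * x v = 0)
    (u v : V) :
    |(2 * L μ x u - f (x u) / 2) - (2 * L μ x v - f (x v) / 2)| =
      2 * |L μ x u - L μ x v| - |f (x u) - f (x v)| / 2 := by
  rcases le_total (x v) (x u) with h | h
  · have a := L_ge μ x hμ h1 hx u v h
    have b := f_mono h
    rw [abs_of_nonneg (by linarith), abs_of_nonneg (by linarith), abs_of_nonneg (by linarith)]
    ring
  · have a := L_ge μ x hμ h1 hx v u h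
    have b := f_mono h
    rw [abs_of_nonpos (by linarith), abs_of_nonpos (by linarith), abs_of_nonpos (by linarith)]
    ring

lemma triple (μ x : V → ℝ) (hμ : ∀ v, 0 ≤ μ v) (h1 : ∑ v, μ v = 1) (hx : ∑ v, μ v * x v = 0) :
    2 * ∑ u, ∑ v, μ u * μ v * |L μ x u - L μ x v| =
      ∑ u, μ u * Y μ x u ^ 2 + ∑ u, μ u * x u ^ 2 := by
  -- E g := triple expectation
  let E : (V → V → V → ℝ) → ℝ := fun g => ∑ u, ∑ v, ∑ w, μ u * μ v * μ w * g u v w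
  have Eadd : ∀ g k, E (fun u v w => g u v w + k u v w) = E g + E k := by
    intro g k; simp only [E, mul_add, Finset.sum_add_distrib]
  have Esw1 : ∀ g, E (fun u v w => g v u w) = E g := by
    intro g; simp only [E]; rw [Finset.sum_comm]
    refine Finset.sum_congr rfl fun u _ => Finset.sum_congr rfl fun v _ =>
      Finset.sum_congr rfl fun w _ => by ring
  have Esw2 : ∀ g, E (fun u v w => g u w v) = E g := by
    intro g; simp only [E]
    refine Finset.sum_congr rfl fun u _ => ?_
    rw [Finset.sum_comm]
    refine Finset.sum_congr rfl fun v _ =>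
      Finset.sum_congr rfl fun w _ => by ring
  have Ecyc : ∀ g, E (fun u v w => g v w u) = E g := fun g =>
    (Esw1 (fun u v w => g u w v)).trans (Esw2 g)
  have Ecyc2 : ∀ g, E (fun u v w => g w u v) = E g := fun g =>
    (Esw2 (fun u v w => g v u w)).trans (Esw1 g)
  let A : V → V → V → ℝ := fun u v w => |f (x u - x w) - f (x v - x w)|
  let B : V → V → V → ℝ := fun u v w => |x u - x v| * |x u - x w|
  let C : V → V → V → ℝ := fun u v _ => (x u - x v) ^ 2 / 2
  have hA : 2 * ∑ u, ∑ v, μ u * μ v * |L μ x u - L μ x v| = E A := by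
    simp only [E, A, absL μ x hμ, Finset.mul_sum]
    refine Finset.sum_congr rfl fun u _ => Finset.sum_congr rfl fun v _ =>
      Finset.sum_congr rfl fun w _ => by ring
  have hB : ∑ u, μ u * Y μ x u ^ 2 = E B := by
    simp only [E, B, Y]
    refine Finset.sum_congr rfl fun u _ => ?_
    rw [sq, Finset.sum_mul_sum, Finset.mul_sum]
    refine Finset.sum_congr rfl fun v _ => ?_
    rw [Finset.mul_sum]
    refine Finset.sum_congr rfl fun w _ => by ring
  have hC : E C = ∑ u, μ u * x u ^ 2 := by
    simp only [E, C]
    have e1 : ∀ u v, ∑ w, μ u * μ v * μ w * ((x u - x v) ^ 2 / 2) =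
        μ u * μ v * ((x u - x v) ^ 2 / 2) := by
      intro u v
      rw [← Finset.sum_mul, ← Finset.mul_sum, h1, mul_one]
    have e2 : ∀ u v, μ u * μ v * ((x u - x v) ^ 2 / 2) =
        (μ u * x u ^ 2 / 2) * μ v + (μ u / 2) * (μ v * x v ^ 2) - μ u * x u * (μ v * x v) := by
      intro u v; ring
    simp only [e1, e2, Finset.sum_add_distrib, Finset.sum_sub_distrib, ← Finset.mul_sum, h1, hx,
      ← Finset.sum_mul, ← Finset.sum_div]
    ring
  have hsum : E (fun u v w => A u v w + A u w v + A v w u) =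
      E (fun u v w => B u v w + B v u w + B w u v + (C u v w + C v w u + C w u v)) := by
    congr 1
    funext u v w
    have := tri (x u) (x v) (x w)
    simp only [A, B, C]
    linarith
  have l1 : E (fun u v w => A u v w + A u w v + A v w u) = 3 * E A := by
    rw [Eadd (fun u v w => A u v w + A u w v) (fun u v w => A v w u),
      Eadd A (fun u v w => A u w v), Esw2 A, Ecyc A]; ring
  have l2 : E (fun u v w => B u v w + B v u w + B w u v + (C u v w + C v w u + C w u v)) =
      3 * E B + 3 * E C := by
    rw [Eadd (fun u v w => B u v w + B v u w + B w u v)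
        (fun u v w => C u v w + C v w u + C w u v),
      Eadd (fun u v w => B u v w + B v u w) (fun u v w => B w u v),
      Eadd B (fun u v w => B v u w), Esw1 B, Ecyc2 B,
      Eadd (fun u v w => C u v w + C v w u) (fun u v w => C w u v),
      Eadd C (fun u v w => C v w u), Ecyc C, Ecyc2 C]; ring
  rw [hA, hB, ← hC]
  linarith

lemma keyM (μ x : V → ℝ) (hμ : ∀ v, 0 ≤ μ v) (h1 : ∑ v, μ v = 1) (hx : ∑ v, μ v * x v = 0) :
    ∑ u, μ u * Y μ x u ^ 2 ≤ ∑ u, ∑ v, μ u * μ v *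
      |(2 * L μ x u - f (x u) / 2) - (2 * L μ x v - f (x v) / 2)| := by
  simp only [absM μ x hμ h1 hx]
  have t := triple μ x hμ h1 hx
  have e : ∑ u, ∑ v, μ u * μ v * ((x u ^ 2 + x v ^ 2) / 2) = ∑ u, μ u * x u ^ 2 := by
    have e2 : ∀ u v, μ u * μ v * ((x u ^ 2 + x v ^ 2) / 2) =
        (μ u * x u ^ 2 / 2) * μ v + (μ u / 2) * (μ v * x v ^ 2) := by
      intro u v; ring
    simp only [e2, Finset.sum_add_distrib, ← Finset.mul_sum, h1,
      ← Finset.sum_mul, ← Finset.sum_div]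
    ring
  have : ∑ u, ∑ v, μ u * μ v * (2 * |L μ x u - L μ x v| - (x u ^ 2 + x v ^ 2) / 2) ≤
      ∑ u, ∑ v, μ u * μ v * (2 * |L μ x u - L μ x v| - |f (x u) - f (x v)| / 2) := by
    refine Finset.sum_le_sum fun u _ => Finset.sum_le_sum fun v _ => ?_
    refine mul_le_mul_of_nonneg_left ?_ (mul_nonneg (hμ u) (hμ v))
    linarith [f_diff_le' (x u) (x v)]
  refine le_trans (le_of_eq ?_) this
  have e3 : ∀ u v, μ u * μ v * (2 * |L μ x u - L μ x v| - (x u ^ 2 + x v ^ 2) / 2) =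
      2 * (μ u * μ v * |L μ x u - L μ x v|) - μ u * μ v * ((x u ^ 2 + x v ^ 2) / 2) := by
    intro u v; ring
  simp only [e3, Finset.sum_sub_distrib, ← Finset.mul_sum]
  rw [e, t]; ring

end GC

/-- **Generalized Cheeger inequality** (main theorem, `φ(G,D_G)` form):
`xᵀL_G x / xᵀL_H x ≥ φ(G,D_G)·φ(G,H)/4` for every `x` with `xᵀd = 0`. -/
theorem generalized_cheeger_demand {V : Type*} [Fintype V] [DecidableEq V] [Nonempty V]
    (G H : V → V → ℝ)
    (hGsymm : ∀ u v, G u v = G v u) (hGnn : ∀ u v, 0 ≤ G u v) (hGdiag : ∀ v, G v v = 0)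
    (hHsymm : ∀ u v, H u v = H v u) (hHnn : ∀ u v, 0 ≤ H u v) (hHdiag : ∀ v, H v v = 0)
    (hvol : 0 < vol G Finset.univ)
    (α β : ℝ) (hα : 0 ≤ α) (hβ : 0 ≤ β)
    (hcapD : ∀ S : Finset V, α * cap (demand G) S ≤ cap G S)
    (hcapH : ∀ S : Finset V, β * cap H S ≤ cap G S)
    (x : V → ℝ) (hx : ∑ v, deg G v * x v = 0) :
    α * β * quadForm H x ≤ 4 * quadForm G x := by
  obtain ⟨N, hN⟩ : ∃ N, N = vol G Finset.univ := ⟨_, rfl⟩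
  rw [← hN] at hvol
  obtain ⟨μ, hμd⟩ : ∃ μ : V → ℝ, ∀ v, deg G v = N * μ v :=
    ⟨fun v => deg G v / N, fun v => by field_simp⟩
  have hdnn : ∀ v, 0 ≤ deg G v := fun v => Finset.sum_nonneg fun u _ => hGnn v u
  have hμ : ∀ v, 0 ≤ μ v := fun v => by
    have := hdnn v
    rw [hμd] at this
    exact nonneg_of_mul_nonneg_right this hvol
  have h1 : ∑ v, μ v = 1 := by
    have : N * ∑ v, μ v = N := by
      rw [Finset.mul_sum]
      conv_rhs => rw [hN]
      exact Finset.sum_congr rfl fun v _ => (hμd v).symm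
    exact mul_left_cancel₀ hvol.ne' (by rw [this, mul_one])
  have hx' : ∑ v, μ v * x v = 0 := by
    have : N * ∑ v, μ v * x v = 0 := by
      rw [Finset.mul_sum, ← hx]
      exact Finset.sum_congr rfl fun v _ => by rw [hμd]; ring
    exact (mul_eq_zero.1 this).resolve_left hvol.ne'
  have kM := GC.keyM μ x hμ h1 hx'
  -- cuts against the demand graph
  have cD := GC.coarea2 G (demand G) α hcapD (fun u => 2 * GC.L μ x u - GC.f (x u) / 2)
  have cH := GC.coarea2 G H β hcapH (fun u => GC.f (x u))
  have eD : ∑ u, ∑ v, demand G u v *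
      |(2 * GC.L μ x u - GC.f (x u) / 2) - (2 * GC.L μ x v - GC.f (x v) / 2)| =
      N * ∑ u, ∑ v, μ u * μ v *
      |(2 * GC.L μ x u - GC.f (x u) / 2) - (2 * GC.L μ x v - GC.f (x v) / 2)| := by
    simp only [Finset.mul_sum]
    refine Finset.sum_congr rfl fun u _ => Finset.sum_congr rfl fun v _ => ?_
    unfold demand
    by_cases huv : u = v
    · subst huv; simp
    · rw [if_neg huv, ← hN, hμd, hμd]; field_simp
  simp only [eD] at cD
  simp only [GC.absM μ x hμ h1 hx'] at cD kM
  have hHq : ∑ u, ∑ v, H u v * (x u - x v) ^ 2 ≤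
      2 * ∑ u, ∑ v, H u v * |GC.f (x u) - GC.f (x v)| := by
    simp only [Finset.mul_sum]
    refine Finset.sum_le_sum fun u _ => Finset.sum_le_sum fun v _ => ?_
    nlinarith [mul_le_mul_of_nonneg_left (GC.f_diff_ge (x u) (x v)) (hHnn u v)]
  have sY : ∑ u, ∑ v, G u v * (GC.Y μ x u ^ 2 + GC.Y μ x v ^ 2) =
      2 * (N * ∑ u, μ u * GC.Y μ x u ^ 2) := by
    have a1 : ∑ u, ∑ v, G u v * GC.Y μ x u ^ 2 = N * ∑ u, μ u * GC.Y μ x u ^ 2 := by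
      rw [Finset.mul_sum]
      refine Finset.sum_congr rfl fun u _ => ?_
      rw [← Finset.sum_mul, ← mul_assoc, ← hμd]; rfl
    have a2 : ∑ u, ∑ v, G u v * GC.Y μ x v ^ 2 = ∑ u, ∑ v, G u v * GC.Y μ x u ^ 2 := by
      rw [Finset.sum_comm]
      exact Finset.sum_congr rfl fun u _ => Finset.sum_congr rfl fun v _ => by rw [hGsymm]
    simp only [mul_add, Finset.sum_add_distrib]
    rw [a2, a1]; ring
  have hedge : ∑ u, ∑ v, G u v * (2 * α * |GC.L μ x u - GC.L μ x v|) ≤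
      ∑ u, ∑ v, (G u v * (x u - x v) ^ 2 +
        α ^ 2 / 2 * (G u v * (GC.Y μ x u ^ 2 + GC.Y μ x v ^ 2))) := by
    refine Finset.sum_le_sum fun u _ => Finset.sum_le_sum fun v _ => ?_
    have p := GC.absL_le μ x hμ u v
    have q : 2 * α * |GC.L μ x u - GC.L μ x v| ≤ (x u - x v) ^ 2 +
        α ^ 2 / 2 * (GC.Y μ x u ^ 2 + GC.Y μ x v ^ 2) := by
      have p2 := mul_le_mul_of_nonneg_left p hα
      rw [← sq_abs (x u - x v)]
      nlinarith [sq_nonneg (|x u - x v| - α * ((GC.Y μ x u + GC.Y μ x v) / 2)),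
        sq_nonneg (α * (GC.Y μ x u - GC.Y μ x v))]
    nlinarith [mul_le_mul_of_nonneg_left q (hGnn u v)]
  simp only [Finset.sum_add_distrib, ← Finset.mul_sum] at hedge
  rw [← Finset.sum_congr rfl fun u _ => rfl, sY] at hedge
  have eL : ∑ u, ∑ v, G u v * (2 * α * |GC.L μ x u - GC.L μ x v|) =
      α * ∑ u, ∑ v, G u v *
        (2 * |GC.L μ x u - GC.L μ x v| - |GC.f (x u) - GC.f (x v)| / 2) +
      α / 2 * ∑ u, ∑ v, G u v * |GC.f (x u) - GC.f (x v)| := by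
    simp only [Finset.mul_sum, ← Finset.sum_add_distrib]
    refine Finset.sum_congr rfl fun u _ => Finset.sum_congr rfl fun v _ => by ring
  rw [eL] at hedge
  have b1 := mul_le_mul_of_nonneg_left cD hα
  have b2 := mul_le_mul_of_nonneg_left kM (mul_nonneg (mul_nonneg hα hα) hvol.le)
  have b3 := mul_le_mul_of_nonneg_left cH hα
  have b4 := mul_le_mul_of_nonneg_left hHq (mul_nonneg hα hβ)
  unfold quadForm
  nlinarith
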